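/- Let (p, F) be a generating pair and let θ = β ᾱ = β α α α ⋯ be eventually periodic, where α and β are nonempty finite strings over [N] with e(β) = e(α). Then T(θ) is self-similar: there exists a similitude φ of ℝ² with ratio s^{−e(α)} > 1 such that for every tile t ∈ T(θ), the set φ(t) is a union of tiles of T(θ). -/

import Mathlib

/-!
The expanding map is `φ = f_{-β} ∘ f_{-α} ∘ (f_{-β})⁻¹`, of ratio `s^{-e(α)}`.

Patches are nested, `T(θ,k) ⊆ T(θ,k+1)`, because
`f_{-(θ|k)} ∘ f_σ = f_{-(θ|k+1)} ∘ f_{θ_{k+1}σ}` (`patch_mono`), so every tile can be taken in a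
patch with `k = |β| + m`. There `θ|k = β(ψ|m)`, and `αψ = ψ` gives
`φ ∘ f_{-(θ|k)} = f_{-β} ∘ f_{-α(ψ|m)} = f_{-(θ|k+|α|)}`. Hence `φ` maps the tile indexed by `σ` to
`f_{-(θ|k+|α|)}(f_σ(p))`, where `e⁻(σ) < e(θ|k) ≤ e(θ|k+|α|)`. Repeated use of `p = ⋃ f_i(p)`
splits `f_σ(p)` into sets `f_τ(p)` with `τ ∈ S_{e(θ|k+|α|)}` (`exists_subdivision`), and these
give tiles of `T(θ,k+|α|)`.
-/

open Set

noncomputable section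

abbrev Pt := EuclideanSpace ℝ (Fin 2)

/-- A similitude of the plane with scaling ratio `r`. -/
def IsSimilitude (f : Pt → Pt) (r : ℝ) : Prop :=
  Function.Bijective f ∧ ∀ x y, dist (f x) (f y) = r * dist x y

/-- `e(σ) = a_{σ₁} + ⋯ + a_{σ_k}` for a finite string `σ` over `[N]`. -/
def estr {N : ℕ} (a : Fin N → ℕ) (σ : List (Fin N)) : ℕ := (σ.map a).sum

/-- `e⁻(σ) = e(σ) - a_{σ_k}` (the sum over all but the last letter). -/
def eminus {N : ℕ} (a : Fin N → ℕ) (σ : List (Fin N)) : ℕ := estr a σ.dropLast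

/-- `f_σ = f_{σ₁} ∘ f_{σ₂} ∘ ⋯ ∘ f_{σ_k}`. -/
def fstr {N : ℕ} (f : Fin N → Pt → Pt) (σ : List (Fin N)) : Pt → Pt :=
  σ.foldr (fun i g => f i ∘ g) id

/-- `f_{-σ} = f_{σ₁}⁻¹ ∘ f_{σ₂}⁻¹ ∘ ⋯ ∘ f_{σ_k}⁻¹`. -/
def fneg {N : ℕ} (f : Fin N → Pt → Pt) (σ : List (Fin N)) : Pt → Pt :=
  σ.foldr (fun i g => Function.invFun (f i) ∘ g) id

/-- `S_n` = nonempty finite strings `σ` with `e(σ) ≥ n > e⁻(σ)`. -/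
def Sset {N : ℕ} (a : Fin N → ℕ) (n : ℕ) : Set (List (Fin N)) :=
  {σ | σ ≠ [] ∧ n ≤ estr a σ ∧ eminus a σ < n}

/-- `θ|k = θ₁θ₂⋯θ_k` (we index infinite strings from 0, so `θ|k = θ 0, …, θ (k-1)`). -/
def trunc {N : ℕ} (θ : ℕ → Fin N) (k : ℕ) : List (Fin N) :=
  (List.range k).map θ

/-- The tile `t(θ,k,σ) = (f_{-(θ|k)} ∘ f_σ)(p)`. -/
def tile {N : ℕ} (f : Fin N → Pt → Pt) (p : Set Pt) (θ : ℕ → Fin N) (k : ℕ)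
    (σ : List (Fin N)) : Set Pt :=
  (fneg f (trunc θ k) ∘ fstr f σ) '' p

/-- The patch `T(θ,k) = { t(θ,k,σ) : σ ∈ S_{e(θ|k)} }`. -/
def patch {N : ℕ} (a : Fin N → ℕ) (f : Fin N → Pt → Pt) (p : Set Pt) (θ : ℕ → Fin N)
    (k : ℕ) : Set (Set Pt) :=
  tile f p θ k '' Sset a (estr a (trunc θ k))

/-- The tiling `T(θ) = ⋃_{k ≥ 1} T(θ,k)`. -/
def tiling {N : ℕ} (a : Fin N → ℕ) (f : Fin N → Pt → Pt) (p : Set Pt)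
    (θ : ℕ → Fin N) : Set (Set Pt) :=
  ⋃ k ∈ {k : ℕ | 1 ≤ k}, patch a f p θ k

/-- Concatenation of a finite string `α` with an infinite string `θ`. -/
def cat {N : ℕ} (α : List (Fin N)) (θ : ℕ → Fin N) : ℕ → Fin N :=
  fun i => if h : i < α.length then α.get ⟨i, h⟩ else θ (i - α.length)

/-- A generating pair `(p, F)` with data `a₁,…,a_N` and scaling number `s`. -/
structure GenPair (N : ℕ) (a : Fin N → ℕ) (s : ℝ) (p : Set Pt)
    (f : Fin N → Pt → Pt) : Prop where
  two_le : 2 ≤ N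
  a_pos : ∀ n, 0 < a n
  a_gcd : Finset.univ.gcd a = 1
  s_pos : 0 < s
  s_lt_one : s < 1
  s_eq : ∑ n, s ^ (2 * a n) = 1
  p_nonempty : p.Nonempty
  p_compact : IsCompact p
  p_closure : p = closure (interior p)
  sim : ∀ n, IsSimilitude (f n) (s ^ a n)
  cover : p = ⋃ n, f n '' p
  disj : ∀ m n, m ≠ n → interior (f m '' p) ∩ interior (f n '' p) = ∅

/-! ### Similitudes -/

lemma IsSimilitude.comp {g h : Pt → Pt} {r q : ℝ} (hg : IsSimilitude g r)
    (hh : IsSimilitude h q) : IsSimilitude (g ∘ h) (r * q) := by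
  refine ⟨hg.1.comp hh.1, fun x y => ?_⟩
  simp only [Function.comp_apply, hg.2, hh.2]
  ring

lemma IsSimilitude.invFun {g : Pt → Pt} {r : ℝ} (hr : r ≠ 0) (hg : IsSimilitude g r) :
    IsSimilitude (Function.invFun g) r⁻¹ := by
  have hR : Function.RightInverse (Function.invFun g) g :=
    Function.rightInverse_invFun hg.1.surjective
  have hL : Function.LeftInverse (Function.invFun g) g :=
    Function.leftInverse_invFun hg.1.injective
  refine ⟨⟨hR.injective, hL.surjective⟩, fun x y => ?_⟩
  have h := hg.2 (Function.invFun g x) (Function.invFun g y)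
  rw [hR x, hR y] at h
  rw [h, inv_mul_cancel_left₀ hr]

/-! ### Finite strings -/

section Strings

variable {N : ℕ} (a : Fin N → ℕ) (f : Fin N → Pt → Pt)

lemma estr_append (σ τ : List (Fin N)) : estr a (σ ++ τ) = estr a σ + estr a τ := by
  simp [estr]

lemma fstr_append (σ τ : List (Fin N)) : fstr f (σ ++ τ) = fstr f σ ∘ fstr f τ := by
  induction σ with
  | nil => rfl
  | cons i σ ih =>
    change f i ∘ fstr f (σ ++ τ) = f i ∘ fstr f σ ∘ fstr f τ
    rw [ih]

lemma fneg_append (σ τ : List (Fin N)) : fneg f (σ ++ τ) = fneg f σ ∘ fneg f τ := by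
  induction σ with
  | nil => rfl
  | cons i σ ih =>
    change Function.invFun (f i) ∘ fneg f (σ ++ τ) = Function.invFun (f i) ∘ fneg f σ ∘ fneg f τ
    rw [ih]

lemma fneg_isSimilitude {s : ℝ} (hs : s ≠ 0) (hf : ∀ n, IsSimilitude (f n) (s ^ a n))
    (σ : List (Fin N)) : IsSimilitude (fneg f σ) (s ^ estr a σ)⁻¹ := by
  induction σ with
  | nil => exact ⟨Function.bijective_id, fun x y => by simp [fneg, estr]⟩
  | cons i σ ih =>
    have h := ((hf i).invFun (pow_ne_zero _ hs)).comp ih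
    have e : (s ^ estr a (i :: σ))⁻¹ = (s ^ a i)⁻¹ * (s ^ estr a σ)⁻¹ := by
      simp [estr, pow_add, mul_comm]
    rw [e]
    exact h

lemma trunc_succ (θ : ℕ → Fin N) (k : ℕ) : trunc θ (k + 1) = trunc θ k ++ [θ k] := by
  simp [trunc, List.range_succ]

lemma trunc_cat (β : List (Fin N)) (ψ : ℕ → Fin N) (m : ℕ) :
    trunc (cat β ψ) (β.length + m) = β ++ trunc ψ m := by
  apply List.ext_getElem
  · simp [trunc]
  · intro i h₁ h₂
    by_cases hi : i < β.length
    · simp [trunc, cat, hi]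
    · simp [trunc, cat, hi, List.getElem_append_right (not_lt.mp hi)]

end Strings

/-! ### Nested patches and subdivision -/

section Tiling

variable {N : ℕ} {a : Fin N → ℕ} {f : Fin N → Pt → Pt} {p : Set Pt}

lemma patch_subset_succ (hf : ∀ n, Function.Bijective (f n)) (θ : ℕ → Fin N) (k : ℕ) :
    patch a f p θ k ⊆ patch a f p θ (k + 1) := by
  rintro _ ⟨σ, ⟨hne, h₁, h₂⟩, rfl⟩
  refine ⟨θ k :: σ, ⟨by simp, ?_, ?_⟩, ?_⟩
  · simp only [trunc_succ, estr_append]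
    simp only [estr, List.map_cons, List.sum_cons, List.map_nil, List.sum_nil] at *
    omega
  · rw [eminus, List.dropLast_cons_of_ne_nil hne, trunc_succ, estr_append]
    simp only [eminus, estr, List.map_cons, List.sum_cons, List.map_nil, List.sum_nil] at *
    omega
  · have h : fneg f (trunc θ (k + 1)) ∘ fstr f (θ k :: σ) = fneg f (trunc θ k) ∘ fstr f σ := by
      rw [trunc_succ, fneg_append]
      funext x
      change fneg f (trunc θ k) (Function.invFun (f (θ k)) (f (θ k) (fstr f σ x))) = _
      rw [Function.leftInverse_invFun (hf _).injective]
      rfl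
    rw [tile, tile, h]

lemma patch_mono (hf : ∀ n, Function.Bijective (f n)) (θ : ℕ → Fin N) :
    Monotone (patch a f p θ) :=
  monotone_nat_of_le_succ (patch_subset_succ hf θ)

/-- A string `σ` with `e⁻(σ) < n` is either in `S_n` or still too short; in the second case it is
extended letter by letter, and `f_σ(p)` is split by `p = ⋃ f_i(p)`, until `S_n` is reached. -/
lemma exists_subdivision (ha : ∀ n, 0 < a n) (hp : p = ⋃ n, f n '' p) (n : ℕ) :
    ∀ σ : List (Fin N), σ ≠ [] → eminus a σ < n →
      ∃ A ⊆ Sset a n, fstr f σ '' p = ⋃ τ ∈ A, fstr f τ '' p := by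
  suffices H : ∀ d : ℕ, ∀ σ : List (Fin N), n - estr a σ ≤ d → σ ≠ [] → eminus a σ < n →
      ∃ A ⊆ Sset a n, fstr f σ '' p = ⋃ τ ∈ A, fstr f τ '' p from
    fun σ => H _ σ le_rfl
  intro d
  induction d with
  | zero =>
    intro σ hd hne hlt
    exact ⟨{σ}, by rintro _ rfl; exact ⟨hne, by omega, hlt⟩, by simp⟩
  | succ d ih =>
    intro σ hd hne hlt
    rcases le_or_gt n (estr a σ) with hle | hgt
    · exact ⟨{σ}, by rintro _ rfl; exact ⟨hne, hle, hlt⟩, by simp⟩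
    · have key : ∀ i, ∃ A ⊆ Sset a n, fstr f (σ ++ [i]) '' p = ⋃ τ ∈ A, fstr f τ '' p := by
        intro i
        refine ih _ ?_ (by simp) ?_
        · have h : estr a [i] = a i := by simp [estr]
          have := ha i
          rw [estr_append, h]
          omega
        · simpa [eminus] using hgt
      choose A hA hAeq using key
      refine ⟨⋃ i, A i, iUnion_subset hA, ?_⟩
      calc fstr f σ '' p = ⋃ i, fstr f (σ ++ [i]) '' p := by
            conv_lhs => rw [hp]
            simp only [image_iUnion, fstr_append, image_comp]
            rfl
        _ = ⋃ τ ∈ ⋃ i, A i, fstr f τ '' p := by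
            simp only [hAeq, biUnion_iUnion]

end Tiling

/-- if `θ = βᾱ` is eventually periodic with `e(β) = e(α)` (here `ψ = ᾱ`
is the periodic string, characterized by `αψ = ψ`, and `θ = βψ`), then `T(θ)` is
self-similar: some similitude `φ` of ratio `s^{-e(α)} > 1` maps every tile of `T(θ)`
onto a union of tiles of `T(θ)`. -/
theorem stmt_13 (N : ℕ) (a : Fin N → ℕ) (s : ℝ) (p : Set Pt) (f : Fin N → Pt → Pt)
    (hGP : GenPair N a s p f) (α β : List (Fin N)) (hα : α ≠ []) (hβ : β ≠ [])
    (he : estr a β = estr a α) (ψ θ : ℕ → Fin N) (hψ : cat α ψ = ψ)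
    (hθ : θ = cat β ψ) :
    ∃ φ : Pt → Pt, IsSimilitude φ (s ^ estr a α)⁻¹ ∧ 1 < (s ^ estr a α)⁻¹ ∧
      ∀ t ∈ tiling a f p θ, ∃ S ⊆ tiling a f p θ, φ '' t = ⋃₀ S := by
  have hs : s ≠ 0 := hGP.s_pos.ne'
  have hbij : ∀ n, Function.Bijective (f n) := fun n => (hGP.sim n).1
  have hβs := fneg_isSimilitude a f hs hGP.sim β
  have hαs := fneg_isSimilitude a f hs hGP.sim α
  have hc : (s ^ estr a β)⁻¹ ≠ 0 := inv_ne_zero (pow_ne_zero _ hs)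
  refine ⟨fneg f β ∘ fneg f α ∘ Function.invFun (fneg f β), ?_, ?_, ?_⟩
  · have h := hβs.comp (hαs.comp (hβs.invFun hc))
    rwa [mul_left_comm, mul_inv_cancel₀ hc, mul_one] at h
  · apply (one_lt_inv₀ (pow_pos hGP.s_pos _)).2
    apply pow_lt_one₀ hGP.s_pos.le hGP.s_lt_one
    obtain ⟨i, l, rfl⟩ := List.exists_cons_of_ne_nil hα
    have := hGP.a_pos i
    simp only [estr, List.map_cons, List.sum_cons]
    omega
  · intro t ht
    simp only [tiling, mem_iUnion, mem_ofPred_eq] at ht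
    obtain ⟨m, -, ht⟩ := ht
    obtain ⟨σ, ⟨hne, -, h₂⟩, rfl⟩ := patch_mono hbij θ (Nat.le_add_left m β.length) ht
    have hk : trunc θ (β.length + m) = β ++ trunc ψ m := by rw [hθ, trunc_cat]
    have hk' : trunc θ (β.length + (α.length + m)) = β ++ (α ++ trunc ψ m) := by
      rw [hθ, trunc_cat, ← trunc_cat α ψ m, hψ]
    have hlt : eminus a σ < estr a (trunc θ (β.length + (α.length + m))) := by
      rw [hk, estr_append] at h₂
      rw [hk', estr_append, estr_append]
      omega
    obtain ⟨A, hA, hAeq⟩ := exists_subdivision (f := f) hGP.a_pos hGP.cover _ σ hne hlt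
    refine ⟨tile f p θ (β.length + (α.length + m)) '' A, ?_, ?_⟩
    · refine (image_mono hA).trans ?_
      have h1 : 1 ≤ β.length + (α.length + m) := by
        have := List.length_pos_iff.2 hβ
        omega
      exact subset_biUnion_of_mem (u := patch a f p θ) h1
    · have hφ : (fneg f β ∘ fneg f α ∘ Function.invFun (fneg f β)) ∘
          fneg f (trunc θ (β.length + m)) = fneg f (trunc θ (β.length + (α.length + m))) := by
        rw [hk, hk', fneg_append, fneg_append, fneg_append]
        funext x
        simp only [Function.comp_apply]
        rw [Function.leftInverse_invFun hβs.1.injective]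
      rw [tile, ← image_comp, ← Function.comp_assoc, hφ, image_comp, hAeq]
      simp only [image_iUnion, sUnion_image, tile, image_comp]
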